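/- arXiv:2411.11486 — 8 statements merged into one kernel-verified Lean document; each statement's English description precedes it below -/
import Mathlib

section
/- Let A : ℝⁿ → ℝˡ be a linear map with operator norm ‖A‖, let β > 0 with β‖A‖ < 1, and let e_x ∈ ℝⁿ, e_λ ∈ ℝˡ be not both zero. Then ψ := ‖e_x‖² + ‖e_λ − β A e_x‖² satisfies ψ < 2φ, where φ := ‖e_x‖² + ‖e_λ‖² − β⟨e_λ, A e_x⟩; moreover ψ ≥ (1 − β‖A‖)(‖e_x‖² + ‖e_λ‖²) > 0. -/
open RealInnerProductSpace

/-- If `β‖A‖ < 1` and `(e_x, e_λ) ≠ 0` then `ψ < 2φ` and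
`ψ ≥ (1 − β‖A‖)(‖e_x‖² + ‖e_λ‖²) > 0`. -/
theorem psi_bounds
    {n l : ℕ} (A : EuclideanSpace ℝ (Fin n) →L[ℝ] EuclideanSpace ℝ (Fin l))
    (β : ℝ) (hβ : 0 < β) (hβA : β * ‖A‖ < 1)
    (ex : EuclideanSpace ℝ (Fin n)) (el : EuclideanSpace ℝ (Fin l))
    (hne : ¬(ex = 0 ∧ el = 0)) :
    ‖ex‖ ^ 2 + ‖el - β • A ex‖ ^ 2 <
      2 * (‖ex‖ ^ 2 + ‖el‖ ^ 2 - β * ⟪el, A ex⟫) ∧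
    ‖ex‖ ^ 2 + ‖el - β • A ex‖ ^ 2 ≥ (1 - β * ‖A‖) * (‖ex‖ ^ 2 + ‖el‖ ^ 2) ∧
    (1 - β * ‖A‖) * (‖ex‖ ^ 2 + ‖el‖ ^ 2) > 0 := by
  -- With `t = β‖A‖` and `w = ‖β • A ex‖ ≤ t‖ex‖`, one has `2φ - ψ = ‖ex‖² + ‖el‖² - w²`, and the
  -- lower bound for `ψ` follows from `2β⟪el, A ex⟫ ≤ 2t‖el‖‖ex‖ ≤ t(‖ex‖² + ‖el‖²)`.
  have h_expand : ‖el - β • A ex‖ ^ 2 =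
      ‖el‖ ^ 2 - 2 * (β * ⟪el, A ex⟫) + (β * ‖A ex‖) ^ 2 := by
    rw [norm_sub_sq_real, inner_smul_right, norm_smul, Real.norm_of_nonneg hβ.le]
  have hw : β * ‖A ex‖ ≤ β * ‖A‖ * ‖ex‖ := by
    rw [mul_assoc]
    exact mul_le_mul_of_nonneg_left (A.le_opNorm ex) hβ.le
  have hinner : β * ⟪el, A ex⟫ ≤ ‖el‖ * (β * ‖A ex‖) := by
    have := mul_le_mul_of_nonneg_left (real_inner_le_norm el (A ex)) hβ.le
    linarith
  have ht : 0 ≤ β * ‖A‖ := by positivity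
  have hw0 : 0 ≤ β * ‖A ex‖ := by positivity
  have hpos : 0 < ‖ex‖ ^ 2 + ‖el‖ ^ 2 := by
    by_cases hx : ex = 0
    · have hl : el ≠ 0 := fun h => hne ⟨hx, h⟩
      positivity
    · positivity
  rw [h_expand]
  generalize β * ⟪el, A ex⟫ = p at *
  generalize β * ‖A ex‖ = w at *
  generalize β * ‖A‖ = t at *
  have hx0 := norm_nonneg ex
  have hl0 := norm_nonneg el
  generalize ‖ex‖ = x at *
  generalize ‖el‖ = y at *
  refine ⟨?_, ?_, mul_pos (by linarith) hpos⟩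
  · have h1 : w ^ 2 ≤ (t * x) ^ 2 := pow_le_pow_left₀ hw0 hw 2
    have h2 : t ^ 2 < 1 := by nlinarith
    -- `x² + y² - t²x² = (1 - t²)(x² + y²) + t²y²` also covers the case `x = 0`.
    have h3 : 0 < (1 - t ^ 2) * (x ^ 2 + y ^ 2) := mul_pos (by linarith) hpos
    nlinarith [sq_nonneg (t * y)]
  · have h1 : y * w ≤ y * (t * x) := mul_le_mul_of_nonneg_left hw hl0
    have h2 : 0 ≤ t * (x - y) ^ 2 := by positivity
    nlinarith [sq_nonneg w]
end

section
/- Let A : ℝⁿ → ℝˡ be a linear map with operator norm ‖A‖, let β > 0 with β‖A‖ < 1, and let e_x ∈ ℝⁿ, e_λ ∈ ℝˡ be not both zero. Then the step size α := φ/ψ satisfies 1/2 < α ≤ (2 + β‖A‖)/(2(1 − β‖A‖)), where φ := ‖e_x‖² + ‖e_λ‖² − β⟨e_λ, A e_x⟩ and ψ := ‖e_x‖² + ‖e_λ − β A e_x‖². -/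
open RealInnerProductSpace

/-!
Let `φ` and `ψ` be the numerator and denominator of the step size. Put `t = β‖A‖`,
`p = β⟪el, A ex⟫` and `q = β‖A ex‖`, so that `q ≤ t‖ex‖` and, by Cauchy-Schwarz,
`2p ≤ t(‖ex‖² + ‖el‖²)`. Expanding the square gives `ψ = ‖ex‖² + ‖el‖² - 2p + q²`, hence

* `2φ - ψ = ‖ex‖² + ‖el‖² - q²`, which is positive because `t < 1`;
* `(2 + t)ψ - 2(1 - t)φ = 3t(‖ex‖² + ‖el‖²) + (2 + t)q² - (2 + 4t)p`, which is nonnegative because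
  `(2 + 4t)p ≤ t(1 + 2t)(‖ex‖² + ‖el‖²)` and `1 + 2t ≤ 3`.
-/

/-- Bounds on the DDRSM step size `α = φ/ψ`:
`1/2 < α ≤ (2 + β‖A‖)/(2(1 − β‖A‖))`. -/
theorem stepsize_bounds
    {n l : ℕ} (A : EuclideanSpace ℝ (Fin n) →L[ℝ] EuclideanSpace ℝ (Fin l))
    (β : ℝ) (hβ : 0 < β) (hβA : β * ‖A‖ < 1)
    (ex : EuclideanSpace ℝ (Fin n)) (el : EuclideanSpace ℝ (Fin l))
    (hne : ¬(ex = 0 ∧ el = 0)) :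
    1 / 2 <
      (‖ex‖ ^ 2 + ‖el‖ ^ 2 - β * ⟪el, A ex⟫) /
        (‖ex‖ ^ 2 + ‖el - β • A ex‖ ^ 2) ∧
    (‖ex‖ ^ 2 + ‖el‖ ^ 2 - β * ⟪el, A ex⟫) /
        (‖ex‖ ^ 2 + ‖el - β • A ex‖ ^ 2) ≤
      (2 + β * ‖A‖) / (2 * (1 - β * ‖A‖)) := by
  have ht0 : 0 ≤ β * ‖A‖ := by positivity
  have hq : β * ‖A ex‖ ≤ β * ‖A‖ * ‖ex‖ := by
    rw [mul_assoc]
    exact mul_le_mul_of_nonneg_left (A.le_opNorm ex) hβ.le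
  have hp : β * ⟪el, A ex⟫ ≤ ‖el‖ * (β * ‖A ex‖) := by
    have h := mul_le_mul_of_nonneg_left (real_inner_le_norm el (A ex)) hβ.le
    linarith
  have hψ : ‖el - β • A ex‖ ^ 2 = ‖el‖ ^ 2 - 2 * (β * ⟪el, A ex⟫) + (β * ‖A ex‖) ^ 2 := by
    rw [norm_sub_sq_real, real_inner_smul_right, norm_smul, Real.norm_of_nonneg hβ.le]
  have hψpos : 0 < ‖ex‖ ^ 2 + ‖el - β • A ex‖ ^ 2 := by
    by_cases hx : ex = 0
    · have hl : el ≠ 0 := fun h => hne ⟨hx, h⟩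
      have := norm_pos_iff.mpr hl
      simp only [hx, map_zero, smul_zero, sub_zero]
      positivity
    · have := norm_pos_iff.mpr hx
      positivity
  have hsum : 0 < ‖ex‖ ^ 2 + ‖el‖ ^ 2 := by
    by_cases hx : ex = 0
    · have := norm_pos_iff.mpr (fun h => hne ⟨hx, h⟩ : el ≠ 0)
      positivity
    · have := norm_pos_iff.mpr hx
      positivity
  have hq0 : 0 ≤ β * ‖A ex‖ := by positivity
  rw [hψ] at hψpos ⊢
  -- What remains is real algebra in `a = ‖ex‖`, `b = ‖el‖`, `p`, `q` and `t`.
  generalize β * ‖A ex‖ = q at *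
  generalize β * ‖A‖ = t at *
  generalize β * ⟪el, A ex⟫ = p at *
  have ha : 0 ≤ ‖ex‖ := norm_nonneg ex
  have hb : 0 ≤ ‖el‖ := norm_nonneg el
  generalize ‖ex‖ = a at *
  generalize ‖el‖ = b at *
  constructor
  · rw [lt_div_iff₀ hψpos]
    have hgap : 0 < a ^ 2 + b ^ 2 - q ^ 2 := by
      rcases ha.eq_or_lt with h | h
      · subst h
        have : q = 0 := by linarith
        subst this
        linarith
      · have hqa : q < a := by nlinarith
        nlinarith [sq_nonneg b]
    linarith
  · rw [div_le_div_iff₀ hψpos (by linarith)]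
    have hp2 : 2 * p ≤ t * (a ^ 2 + b ^ 2) := by
      have h1 : b * q ≤ b * (t * a) := mul_le_mul_of_nonneg_left hq hb
      nlinarith [mul_nonneg ht0 (sq_nonneg (a - b))]
    have h2 : (1 + 2 * t) * (2 * p) ≤ (1 + 2 * t) * (t * (a ^ 2 + b ^ 2)) :=
      mul_le_mul_of_nonneg_left hp2 (by linarith)
    have h3 : (1 + 2 * t) * (t * (a ^ 2 + b ^ 2)) ≤ 3 * (t * (a ^ 2 + b ^ 2)) :=
      mul_le_mul_of_nonneg_right (by linarith) (by positivity)
    have h4 : 0 ≤ (2 + t) * q ^ 2 := by positivity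
    linarith
end

section
/- Let X ⊆ ℝⁿ be a convex set, A : ℝⁿ → ℝˡ a linear map with adjoint Aᵀ, b ∈ ℝˡ, β > 0. Let x, x* ∈ X, ξ, ξ* ∈ ℝⁿ, λ, λ* ∈ ℝˡ, and ē ∈ ℝⁿ. Set e_λ := β(Ax − b) and λ̄ := λ − e_λ. Assume: (a) A x* = b; (b) ⟨(x − ē) − x*, ξ* − Aᵀλ*⟩ ≥ 0; (c) ⟨ē − β(ξ − Aᵀλ̄), x* − x + ē⟩ ≤ 0. Then ⟨(x + βξ) − (x* + βξ*), ē⟩ + ⟨λ − λ*, e_λ − β A ē⟩ ≥ ‖ē‖² + ‖e_λ‖² − β⟨e_λ, A ē⟩ + β⟨x − x*, ξ − ξ*⟩. -/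
open RealInnerProductSpace

/-!
With `u = x - x*`, hypothesis (b) scaled by `β` and the negative of (c) add up to
`⟪ē - β(ξ - ξ*) + βAᵀ(λ̄ - λ*), u - ē⟫ ≥ 0`. Moving `Aᵀ` to the other side of the inner product and
using `βAu = e_λ` (as `Ax* = b`) and `λ̄ = λ - e_λ`, this is the claim after expansion.
-/

/-- The cross-term lemma of DDRSM:
`⟨w − w*, d_β(x, λ̄)⟩ ≥ φ + β⟨x − x*, ξ − ξ*⟩` with `e_λ = β(Ax − b)`, `λ̄ = λ − e_λ`. -/
theorem cross_term_lemma
    {n l : ℕ} (X : Set (EuclideanSpace ℝ (Fin n))) (hX : Convex ℝ X)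
    (A : EuclideanSpace ℝ (Fin n) →L[ℝ] EuclideanSpace ℝ (Fin l))
    (b : EuclideanSpace ℝ (Fin l)) (β : ℝ) (hβ : 0 < β)
    (x xs : EuclideanSpace ℝ (Fin n)) (hx : x ∈ X) (hxs : xs ∈ X)
    (ξ ξs ebar : EuclideanSpace ℝ (Fin n)) (lam lams : EuclideanSpace ℝ (Fin l))
    (ha : A xs = b)
    (hb : ⟪(x - ebar) - xs, ξs - (ContinuousLinearMap.adjoint A) lams⟫ ≥ 0)
    (hc : ⟪ebar - β • (ξ - (ContinuousLinearMap.adjoint A) (lam - β • (A x - b))),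
            xs - x + ebar⟫ ≤ 0) :
    ⟪(x + β • ξ) - (xs + β • ξs), ebar⟫ +
      ⟪lam - lams, β • (A x - b) - β • A ebar⟫ ≥
    ‖ebar‖ ^ 2 + ‖β • (A x - b)‖ ^ 2 - β * ⟪β • (A x - b), A ebar⟫ +
      β * ⟪x - xs, ξ - ξs⟫ := by
  subst ha
  -- Multiply (b) by `β` so that it has the scaling of (c).
  have hβb := mul_nonneg hβ.le hb
  simp only [← real_inner_self_eq_norm_sq, map_sub, map_smul, inner_sub_left, inner_sub_right,
    inner_add_left, inner_add_right, real_inner_smul_left, real_inner_smul_right,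
    ContinuousLinearMap.adjoint_inner_left, ContinuousLinearMap.adjoint_inner_right]
    at hβb hc ⊢
  -- Orient the symmetric inner products consistently, so that they become identical atoms.
  rw [real_inner_comm ξs ebar, real_inner_comm lams (A x), real_inner_comm lams (A ebar),
    real_inner_comm lams (A xs)] at hβb
  rw [real_inner_comm xs ebar, real_inner_comm x ebar, real_inner_comm x ξ,
    real_inner_comm xs ξ, real_inner_comm (A xs) (A x)] at hc
  rw [real_inner_comm (A xs) (A x)]
  linarith
end

section
/- Let E be a real inner product space, u, v ∈ E, c₀ ≥ 0, and β a real number with 0 < β and 2c₀β < 1. Set c := c₀/(1 − 2c₀β). If ⟨u, v⟩ ≥ −c₀‖u‖², then ⟨u, v⟩ ≥ −c‖u + βv‖². -/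
open RealInnerProductSpace

/-- Transfer of `c₀`-weak monotonicity to the transformed variable:
if `⟨u, v⟩ ≥ −c₀‖u‖²` and `c = c₀/(1 − 2c₀β)` with `0 < β`, `2c₀β < 1`,
then `⟨u, v⟩ ≥ −c‖u + βv‖²`. -/
theorem weak_monotonicity_transfer
    {E : Type*} [NormedAddCommGroup E] [InnerProductSpace ℝ E]
    (u v : E) (c₀ β : ℝ) (hc₀ : 0 ≤ c₀) (hβ : 0 < β) (hβc : 2 * c₀ * β < 1)
    (h : ⟪u, v⟫ ≥ -c₀ * ‖u‖ ^ 2) :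
    ⟪u, v⟫ ≥ -(c₀ / (1 - 2 * c₀ * β)) * ‖u + β • v‖ ^ 2 := by
  have hd : 0 < 1 - 2 * c₀ * β := by linarith
  have hn : ‖u + β • v‖ ^ 2 = ‖u‖ ^ 2 + 2 * (β * ⟪u, v⟫) + β ^ 2 * ‖v‖ ^ 2 := by
    rw [norm_add_sq_real, real_inner_smul_right, norm_smul, mul_pow, Real.norm_eq_abs, sq_abs]
  have hv : 0 ≤ c₀ * (β ^ 2 * ‖v‖ ^ 2) := by positivity
  -- After clearing the denominator and expanding the square, the cross terms `2 c₀ β ⟪u, v⟫`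
  -- cancel and the claim becomes `0 ≤ ⟪u, v⟫ + c₀ ‖u‖² + c₀ β² ‖v‖²`.
  rw [ge_iff_le, ← neg_div, div_mul_eq_mul_div, div_le_iff₀ hd, hn]
  linarith
end

section
/- Let H be a real inner product space, w, w*, d ∈ H with d ≠ 0, and real numbers ρ, β, a, c, τ, e, φ with 0 < ρ ≤ 2, β > 0, a ≥ 0, c ≥ 0, τ ≥ 0, e ≥ 0. Set α := φ/‖d‖² and C := 2 − aβ − 2βcτ² − (2 − aβ)ρ/2. Assume: (i) α > 1/2; (ii) ⟨w − w*, d⟩ ≥ φ − βcτ²e; (iii) φ ≥ ((2 − aβ)/2)·e; (iv) C ≥ 0. Then ‖(w − ραd) − w*‖² ≤ ‖w − w*‖² − (ρ/2)·C·e. -/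
/-!
Expanding the square and using `α * ‖d‖ ^ 2 = φ`, the decrease of the squared distance is
`ρ * α * (2 * ⟪w - ws, d⟫ - ρ * φ)`. The cross-term bound and the lower bound on `φ` (with
`ρ ≤ 2`) show that the second factor is at least `C * e`; since `C * e ≥ 0` and `α > 1 / 2`,
the decrease is at least `ρ / 2 * C * e`.
-/

open RealInnerProductSpace

/-- One-step contraction estimate for DDRSM: with step size `α = φ/‖d‖²` and
`C = 2 − aβ − 2βcτ² − (2 − aβ)ρ/2`,
`‖(w − ραd) − w*‖² ≤ ‖w − w*‖² − (ρ/2)·C·e`. -/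
theorem one_step_contraction
    {H : Type*} [NormedAddCommGroup H] [InnerProductSpace ℝ H]
    (w ws d : H) (hd : d ≠ 0) (ρ β a c τ e φ : ℝ)
    (hρ0 : 0 < ρ) (hρ2 : ρ ≤ 2) (hβ : 0 < β) (ha : 0 ≤ a) (hc : 0 ≤ c)
    (hτ : 0 ≤ τ) (he : 0 ≤ e)
    (hα : φ / ‖d‖ ^ 2 > 1 / 2)
    (hcross : ⟪w - ws, d⟫ ≥ φ - β * c * τ ^ 2 * e)
    (hφ : φ ≥ (2 - a * β) / 2 * e)
    (hC : 2 - a * β - 2 * β * c * τ ^ 2 - (2 - a * β) * ρ / 2 ≥ 0) :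
    ‖(w - (ρ * (φ / ‖d‖ ^ 2)) • d) - ws‖ ^ 2 ≤
      ‖w - ws‖ ^ 2 -
        ρ / 2 * (2 - a * β - 2 * β * c * τ ^ 2 - (2 - a * β) * ρ / 2) * e := by
  have hd2 : ‖d‖ ^ 2 ≠ 0 := pow_ne_zero 2 (norm_ne_zero_iff.mpr hd)
  set α := φ / ‖d‖ ^ 2 with hα_def
  have hαd : α * ‖d‖ ^ 2 = φ := div_mul_cancel₀ φ hd2
  have hexp : ‖(w - (ρ * α) • d) - ws‖ ^ 2
      = ‖w - ws‖ ^ 2 - 2 * (ρ * α) * ⟪w - ws, d⟫ + ρ ^ 2 * α * φ := by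
    rw [sub_right_comm, norm_sub_sq_real, real_inner_smul_right, norm_smul, mul_pow,
      Real.norm_eq_abs, sq_abs, ← hαd]
    ring
  have hρα : 0 ≤ ρ * α := mul_nonneg hρ0.le (by linarith)
  have h1 := mul_le_mul_of_nonneg_left hcross hρα
  have hbracket : (2 - a * β - 2 * β * c * τ ^ 2 - (2 - a * β) * ρ / 2) * e
      ≤ (2 - ρ) * φ - 2 * (β * c * τ ^ 2 * e) := by
    linarith [mul_le_mul_of_nonneg_left hφ (sub_nonneg.mpr hρ2)]
  have h2 := mul_le_mul_of_nonneg_left hbracket hρα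
  -- Replacing `α` by its lower bound `1/2` is legitimate because `C * e ≥ 0`.
  have h3 := mul_le_mul_of_nonneg_right
    (show ρ / 2 ≤ ρ * α by linarith [mul_le_mul_of_nonneg_left hα.le hρ0.le])
    (mul_nonneg hC he)
  rw [hexp]
  linarith
end

section
/- Let W* ⊆ ℝᵐ be a nonempty closed set, (wᵏ)_{k≥0} a sequence in ℝᵐ, (Eᵏ)_{k≥0} a sequence of nonnegative reals, and τ, C, c₁, c₂ > 0 constants. Assume for all k: (i) dist(wᵏ, W*) ≤ τ Eᵏ; (ii) dist(w^{k+1}, W*)² ≤ dist(wᵏ, W*)² − C (Eᵏ)²; (iii) c₁ Eᵏ ≤ ‖w^{k+1} − wᵏ‖ ≤ c₂ Eᵏ. Then Eᵏ → 0 as k → ∞, the sequence (wᵏ) converges, and its limit belongs to W*. -/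
/-!
Write `d k` for the distance from `w k` to the solution set. The decrease condition makes `d`
antitone, so `C * E k ^ 2 ≤ (d k - d (k + 1)) * (d k + d (k + 1)) ≤ (d k - d (k + 1)) * (2 * τ * E k)`
by the error bound; dividing by `E k` (the case `E k = 0` being trivial) gives
 `C * E k ≤ 2 * τ * (d k - d (k + 1))`. Telescoping,
`E` is summable. Hence `E` tends to zero, the steps `‖w (k + 1) - w k‖ ≤ c₂ * E k` are summable and
`w` is a Cauchy sequence. Its limit is at distance zero from the closed solution set, since
`d k ≤ τ * E k`.
-/

open Filter

/-- Convergence of DDRSM iterates in abstract form: under the error bound, the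
per-iteration decrease, and the two-sided step/residual comparison, the residuals
tend to zero and the iterates converge to a point of the solution set. -/
theorem iterates_converge_to_solution_set
    {m : ℕ} (Ws : Set (EuclideanSpace ℝ (Fin m))) (hne : Ws.Nonempty)
    (hcl : IsClosed Ws) (w : ℕ → EuclideanSpace ℝ (Fin m)) (E : ℕ → ℝ)
    (hE : ∀ k, 0 ≤ E k) (τ C c₁ c₂ : ℝ)
    (hτ : 0 < τ) (hC : 0 < C) (hc₁ : 0 < c₁) (hc₂ : 0 < c₂)
    (h1 : ∀ k, Metric.infDist (w k) Ws ≤ τ * E k)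
    (h2 : ∀ k, Metric.infDist (w (k + 1)) Ws ^ 2 ≤
      Metric.infDist (w k) Ws ^ 2 - C * E k ^ 2)
    (h3 : ∀ k, c₁ * E k ≤ ‖w (k + 1) - w k‖ ∧ ‖w (k + 1) - w k‖ ≤ c₂ * E k) :
    Tendsto E atTop (nhds 0) ∧
    ∃ wl ∈ Ws, Tendsto w atTop (nhds wl) := by
  set d : ℕ → ℝ := fun k => Metric.infDist (w k) Ws with hd
  have hd0 : ∀ k, 0 ≤ d k := fun k => Metric.infDist_nonneg
  have key : ∀ k, C * E k ≤ 2 * τ * (d k - d (k + 1)) := by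
    intro k
    have h1k : d k ≤ τ * E k := h1 k
    have h2k : d (k + 1) ^ 2 ≤ d k ^ 2 - C * E k ^ 2 := h2 k
    have hCE : 0 ≤ C * E k ^ 2 := by positivity
    have hanti : d (k + 1) ≤ d k := by
      exact abs_le_of_sq_le_sq' (by linarith) (hd0 k) |>.2
    rcases (hE k).eq_or_lt with h0 | hpos
    · have : 0 ≤ 2 * τ * (d k - d (k + 1)) :=
        mul_nonneg (by positivity) (sub_nonneg.2 hanti)
      simpa [← h0] using this
    · refine le_of_mul_le_mul_right ?_ hpos
      have : (d k - d (k + 1)) * (d k + d (k + 1)) ≤ (d k - d (k + 1)) * (2 * τ * E k) :=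
        mul_le_mul_of_nonneg_left (by linarith) (sub_nonneg.2 hanti)
      linarith
  have hsum : Summable E := by
    refine summable_of_sum_range_le (c := 2 * τ * d 0 / C) hE fun n => ?_
    rw [le_div_iff₀ hC, mul_comm, Finset.mul_sum]
    calc ∑ i ∈ Finset.range n, C * E i
        ≤ ∑ i ∈ Finset.range n, 2 * τ * (d i - d (i + 1)) := Finset.sum_le_sum fun i _ => key i
      _ = 2 * τ * (d 0 - d n) := by rw [← Finset.mul_sum, Finset.sum_range_sub']
      _ ≤ 2 * τ * d 0 := by
        have := hd0 n
        gcongr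
        linarith
  have hE0 : Tendsto E atTop (nhds 0) := hsum.tendsto_atTop_zero
  refine ⟨hE0, ?_⟩
  have hcau : CauchySeq w := by
    refine cauchySeq_of_dist_le_of_summable (fun k => c₂ * E k) (fun k => ?_) (hsum.mul_left c₂)
    rw [dist_comm, dist_eq_norm]
    exact (h3 k).2
  obtain ⟨wl, hwl⟩ := cauchySeq_tendsto_of_complete hcau
  refine ⟨wl, ?_, hwl⟩
  have hdl : Tendsto d atTop (nhds (Metric.infDist wl Ws)) :=
    ((Metric.continuous_infDist_pt Ws).tendsto wl).comp hwl
  have hd_zero : Tendsto d atTop (nhds 0) :=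
    squeeze_zero hd0 h1 (by simpa using hE0.const_mul τ)
  exact (hcl.mem_iff_infDist_zero hne).2 (tendsto_nhds_unique hdl hd_zero)
end

section
/- Let W* ⊆ ℝᵐ be a nonempty closed set, (wᵏ)_{k≥0} a sequence in ℝᵐ, (Eᵏ)_{k≥0} nonnegative reals, and τ, C, c₁, c₂ > 0 with C ≤ τ². Assume for all k: (i) dist(wᵏ, W*) ≤ τ Eᵏ; (ii) dist(w^{k+1}, W*)² ≤ dist(wᵏ, W*)² − C (Eᵏ)²; (iii) c₁ Eᵏ ≤ ‖w^{k+1} − wᵏ‖ ≤ c₂ Eᵏ. Then (wᵏ) converges to some w* ∈ W*, and with K := 2τc₂²/(C c₁) and C_q := √(1 − C/τ²), for all M ≥ N ≥ 0 one has ‖w^M − w*‖ ≤ K · C_q^{M−N} · ‖w^N − w*‖; in particular the sequence converges R-linearly. -/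
/-!
Write `d k` for the distance from `w k` to `Ws` and `q = √(1 − C/τ²) < 1`. The decrease condition
and the error bound give `d (k + 1) ≤ q * d k`. They also give
`C * E k ^ 2 ≤ (d k - d (k + 1)) * (d k + d (k + 1)) ≤ (d k - d (k + 1)) * (2 * τ * E k)`,
so the step `‖w (k + 1) - w k‖` is at most `A * (d k - d (k + 1))` with `A = 2τc₂/C`. Telescoping,
the tail of the sequence after `w n` stays within `A * d n`, which tends to zero; hence `w`
converges to a point `wl ∈ Ws`, and
`‖w M - wl‖ ≤ A * d M ≤ A * q ^ (M - N) * d N ≤ A * q ^ (M - N) * ‖w N - wl‖`.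
Finally `A ≤ 2τc₂²/(Cc₁)` as soon as `c₁ ≤ c₂`, which the step comparison forces unless every
residual vanishes; in that case all `w k` lie in `Ws` and the bound is trivial.
-/

/-- The decrease of the distance controls the residual linearly. With `d`, `d'` consecutive
distances and `e` the residual, `d² − d'²` factors and one factor is at most `2τe`. -/
lemma residual_le_distance_drop {d d' e τ C : ℝ} (hd : 0 ≤ d) (hd' : 0 ≤ d') (he : 0 ≤ e)
    (hτ : 0 < τ) (hC : 0 < C) (h1 : d ≤ τ * e) (h2 : d' ^ 2 ≤ d ^ 2 - C * e ^ 2) :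
    e ≤ 2 * τ / C * (d - d') := by
  have hdd : d' ≤ d := by
    refine (sq_le_sq₀ hd' hd).1 ?_
    nlinarith [mul_nonneg hC.le (sq_nonneg e)]
  rw [div_mul_eq_mul_div, le_div_iff₀ hC]
  rcases he.eq_or_lt with rfl | he
  · have := mul_nonneg (by positivity : 0 ≤ 2 * τ) (sub_nonneg.2 hdd)
    linarith
  · refine le_of_mul_le_mul_right ?_ he
    nlinarith [mul_nonneg (sub_nonneg.2 hdd) (by linarith : 0 ≤ 2 * (τ * e) - (d + d'))]

/-- One-step contraction of the distance by the factor `√(1 − C/τ²)`. -/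
lemma distance_contraction {d d' e τ C : ℝ} (hd : 0 ≤ d) (hτ : 0 < τ) (hC : 0 < C)
    (hCτ : C ≤ τ ^ 2) (h1 : d ≤ τ * e) (h2 : d' ^ 2 ≤ d ^ 2 - C * e ^ 2) :
    d' ≤ Real.sqrt (1 - C / τ ^ 2) * d := by
  have hq : 0 ≤ 1 - C / τ ^ 2 := sub_nonneg.2 ((div_le_one (by positivity)).2 hCτ)
  refine abs_le_of_sq_le_sq' ?_ (by positivity) |>.2
  rw [mul_pow, Real.sq_sqrt hq]
  have h3 : d ^ 2 ≤ τ ^ 2 * e ^ 2 := by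
    rw [← mul_pow]
    exact pow_le_pow_left₀ hd h1 2
  have h4 : C / τ ^ 2 * d ^ 2 ≤ C * e ^ 2 := by
    calc C / τ ^ 2 * d ^ 2 ≤ C / τ ^ 2 * (τ ^ 2 * e ^ 2) := by gcongr
      _ = C * e ^ 2 := by field_simp
  linarith

open Filter

/-- R-linear convergence of DDRSM iterates in abstract form, with
`K = 2τc₂²/(Cc₁)` and `C_q = √(1 − C/τ²)`. -/
theorem iterates_linear_convergence
    {m : ℕ} (Ws : Set (EuclideanSpace ℝ (Fin m))) (hne : Ws.Nonempty)
    (hcl : IsClosed Ws) (w : ℕ → EuclideanSpace ℝ (Fin m)) (E : ℕ → ℝ)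
    (hE : ∀ k, 0 ≤ E k) (τ C c₁ c₂ : ℝ)
    (hτ : 0 < τ) (hC : 0 < C) (hc₁ : 0 < c₁) (hc₂ : 0 < c₂) (hCτ : C ≤ τ ^ 2)
    (h1 : ∀ k, Metric.infDist (w k) Ws ≤ τ * E k)
    (h2 : ∀ k, Metric.infDist (w (k + 1)) Ws ^ 2 ≤
      Metric.infDist (w k) Ws ^ 2 - C * E k ^ 2)
    (h3 : ∀ k, c₁ * E k ≤ ‖w (k + 1) - w k‖ ∧ ‖w (k + 1) - w k‖ ≤ c₂ * E k) :
    ∃ wl ∈ Ws, Tendsto w atTop (nhds wl) ∧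
      ∀ M N : ℕ, N ≤ M →
        ‖w M - wl‖ ≤ (2 * τ * c₂ ^ 2 / (C * c₁)) *
          Real.sqrt (1 - C / τ ^ 2) ^ (M - N) * ‖w N - wl‖ := by
  set d : ℕ → ℝ := fun k => Metric.infDist (w k) Ws with hd_def
  set q : ℝ := Real.sqrt (1 - C / τ ^ 2) with hq_def
  set A : ℝ := c₂ * (2 * τ / C) with hA_def
  have hd : ∀ k, 0 ≤ d k := fun k => Metric.infDist_nonneg
  have hq0 : 0 ≤ q := Real.sqrt_nonneg _
  have hq1 : q < 1 := by
    rw [hq_def, Real.sqrt_lt' one_pos]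
    have : 0 < C / τ ^ 2 := by positivity
    linarith
  have hA : 0 ≤ A := by positivity
  have hcontr : ∀ n j, d (n + j) ≤ q ^ j * d n := by
    intro n j
    induction j with
    | zero => simp
    | succ j ih =>
      calc d (n + (j + 1)) ≤ q * d (n + j) :=
            distance_contraction (hd _) hτ hC hCτ (h1 (n + j)) (h2 (n + j))
        _ ≤ q * (q ^ j * d n) := by gcongr
        _ = q ^ (j + 1) * d n := by ring
  have hstep : ∀ k, dist (w k) (w (k + 1)) ≤ A * (d k - d (k + 1)) := by
    intro k
    rw [dist_comm, dist_eq_norm]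
    calc ‖w (k + 1) - w k‖ ≤ c₂ * E k := (h3 k).2
      _ ≤ c₂ * (2 * τ / C * (d k - d (k + 1))) := by
        gcongr
        exact residual_le_distance_drop (hd k) (hd _) (hE k) hτ hC (h1 k) (h2 k)
      _ = A * (d k - d (k + 1)) := by ring
  have htele : ∀ n j, dist (w n) (w (n + j)) ≤ A * (d n - d (n + j)) := by
    intro n j
    induction j with
    | zero => simp
    | succ j ih =>
      have := dist_triangle (w n) (w (n + j)) (w (n + j + 1))
      have := hstep (n + j)
      rw [← add_assoc]
      linarith
  have htail : ∀ n k, n ≤ k → dist (w n) (w k) ≤ A * d n := by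
    intro n k hnk
    obtain ⟨j, rfl⟩ := Nat.exists_eq_add_of_le hnk
    have := mul_nonneg hA (hd (n + j))
    linarith [htele n j]
  have hd0 : Tendsto d atTop (nhds 0) := by
    refine squeeze_zero hd (fun n => by simpa using hcontr 0 n) ?_
    simpa using (tendsto_pow_atTop_nhds_zero_of_lt_one hq0 hq1).mul_const (d 0)
  have hcauchy : CauchySeq w :=
    cauchySeq_of_le_tendsto_0' (fun n => A * d n) htail (by simpa using hd0.const_mul A)
  obtain ⟨wl, hwl⟩ := cauchySeq_tendsto_of_complete hcauchy
  have hmem : wl ∈ Ws := by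
    rw [hcl.mem_iff_infDist_zero hne]
    exact tendsto_nhds_unique
      (((Metric.continuous_infDist_pt Ws).tendsto wl).comp hwl) hd0
  have hlim : ∀ n, ‖w n - wl‖ ≤ A * d n := by
    intro n
    rw [← dist_eq_norm]
    exact le_of_tendsto (tendsto_const_nhds.dist hwl) ((eventually_ge_atTop n).mono (htail n))
  refine ⟨wl, hmem, hwl, fun M N hNM => ?_⟩
  obtain ⟨j, rfl⟩ := Nat.exists_eq_add_of_le hNM
  rw [Nat.add_sub_cancel_left]
  by_cases hc : c₁ ≤ c₂
  · have hAK : A ≤ 2 * τ * c₂ ^ 2 / (C * c₁) := by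
      have hr : 1 ≤ c₂ / c₁ := (one_le_div hc₁).2 hc
      calc A ≤ A * (c₂ / c₁) := le_mul_of_one_le_right hA hr
        _ = 2 * τ * c₂ ^ 2 / (C * c₁) := by
          rw [hA_def]
          field_simp
    have hdN : d N ≤ ‖w N - wl‖ := by
      rw [← dist_eq_norm]
      exact Metric.infDist_le_dist_of_mem hmem
    calc ‖w (N + j) - wl‖ ≤ A * d (N + j) := hlim _
      _ ≤ A * (q ^ j * d N) := by
        gcongr
        exact hcontr N j
      _ = A * q ^ j * d N := by ring
      _ ≤ 2 * τ * c₂ ^ 2 / (C * c₁) * q ^ j * ‖w N - wl‖ := by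
        have := hd N
        gcongr
  · -- If `c₂ < c₁`, the two-sided step comparison forces the residuals to vanish.
    have hE0 : E (N + j) ≤ 0 := by
      have := (h3 (N + j)).1.trans (h3 (N + j)).2
      by_contra! hpos
      exact hc (le_of_mul_le_mul_right this hpos)
    have hdM : d (N + j) ≤ 0 :=
      (h1 (N + j)).trans (mul_nonpos_of_nonneg_of_nonpos hτ.le hE0)
    calc ‖w (N + j) - wl‖ ≤ A * d (N + j) := hlim _
      _ ≤ 0 := mul_nonpos_of_nonneg_of_nonpos hA hdM
      _ ≤ _ := by positivity
end

section
/- Let A : ℝⁿ → ℝˡ be a linear map with operator norm ‖A‖, let β > 0 with β‖A‖ < 1, let ρ > 0, and let e_x ∈ ℝⁿ, e_λ ∈ ℝˡ be not both zero. With φ := ‖e_x‖² + ‖e_λ‖² − β⟨e_λ, A e_x⟩, ψ := ‖e_x‖² + ‖e_λ − β A e_x‖², and α := φ/ψ, the quantity ρ²α²ψ (which equals the squared step length ‖w^{k+1} − wᵏ‖² = ρ²αφ of DDRSM) satisfies ρ²·((2 − β‖A‖)/4)·(‖e_x‖² + ‖e_λ‖²) < ρ²αφ ≤ ρ²·((2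 + β‖A‖)²/(4(1 − β‖A‖)))·(‖e_x‖² + ‖e_λ‖²). -/
/-!
Write `N = ‖e_x‖² + ‖e_λ‖²` and `a = β‖A‖`. By Cauchy–Schwarz and AM-GM,
`|β⟨e_λ, A e_x⟩| ≤ a‖e_λ‖‖e_x‖ ≤ aN/2`, so `(2 - a)N/2 ≤ φ ≤ (2 + a)N/2` and
`ψ ≥ N - 2β⟨e_λ, A e_x⟩ ≥ (1 - a)N`; this gives the upper bound on `φ²/ψ`.
Moreover `2φ - ψ = N - ‖β A e_x‖² > 0` since `a < 1`, so `α = φ/ψ > 1/2`, and the lower bound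
follows from `φ²/ψ > φ/2`.
-/

open RealInnerProductSpace

/-- The scalar form of the bounds, with `a = β‖A‖`, `N = ‖e_x‖² + ‖e_λ‖²`, `t = β⟨e_λ, A e_x⟩` and
`s = ‖β A e_x‖²`, so that `φ = N - t` and `ψ = N - 2 * t + s`. -/
lemma scalar_bounds (a N t s : ℝ) (ha1 : a < 1) (hN : 0 < N) (hs : 0 ≤ s) (hsN : s < N)
    (ht : |t| ≤ a * N / 2) :
    (2 - a) / 4 * N < (N - t) / (N - 2 * t + s) * (N - t) ∧
    (N - t) / (N - 2 * t + s) * (N - t) ≤ (2 + a) ^ 2 / (4 * (1 - a)) * N := by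
  obtain ⟨ht1, ht2⟩ := abs_le.mp ht
  have haN : 0 < (1 - a) * N := mul_pos (by linarith) hN
  have hψ : (1 - a) * N ≤ N - 2 * t + s := by linarith
  have hψ0 : 0 < N - 2 * t + s := haN.trans_le hψ
  have hφ : 0 < N - t := by linarith
  constructor
  · -- `2φ - ψ = N - s` is positive
    have h : 1 / 2 < (N - t) / (N - 2 * t + s) := by
      rw [lt_div_iff₀ hψ0]; linarith
    have := mul_lt_mul_of_pos_right h hφ
    linarith
  · have hφ2 : N - t ≤ (2 + a) * N / 2 := by linarith
    calc (N - t) / (N - 2 * t + s) * (N - t) = (N - t) ^ 2 / (N - 2 * t + s) := by ring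
      _ ≤ ((2 + a) * N / 2) ^ 2 / ((1 - a) * N) := by gcongr
      _ = (2 + a) ^ 2 / (4 * (1 - a)) * N := by
        have h1 : 1 - a ≠ 0 := by linarith
        field_simp
        ring

/-- Two-sided bound on the squared DDRSM step length `ρ²αφ` (with `α = φ/ψ`)
in terms of the squared natural-map residual `‖e_x‖² + ‖e_λ‖²`. -/
theorem step_length_bounds
    {n l : ℕ} (A : EuclideanSpace ℝ (Fin n) →L[ℝ] EuclideanSpace ℝ (Fin l))
    (β ρ : ℝ) (hβ : 0 < β) (hβA : β * ‖A‖ < 1) (hρ : 0 < ρ)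
    (ex : EuclideanSpace ℝ (Fin n)) (el : EuclideanSpace ℝ (Fin l))
    (hne : ¬(ex = 0 ∧ el = 0)) :
    ρ ^ 2 * ((2 - β * ‖A‖) / 4) * (‖ex‖ ^ 2 + ‖el‖ ^ 2) <
      ρ ^ 2 * ((‖ex‖ ^ 2 + ‖el‖ ^ 2 - β * ⟪el, A ex⟫) /
          (‖ex‖ ^ 2 + ‖el - β • A ex‖ ^ 2)) *
        (‖ex‖ ^ 2 + ‖el‖ ^ 2 - β * ⟪el, A ex⟫) ∧
    ρ ^ 2 * ((‖ex‖ ^ 2 + ‖el‖ ^ 2 - β * ⟪el, A ex⟫) /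
          (‖ex‖ ^ 2 + ‖el - β • A ex‖ ^ 2)) *
        (‖ex‖ ^ 2 + ‖el‖ ^ 2 - β * ⟪el, A ex⟫) ≤
      ρ ^ 2 * ((2 + β * ‖A‖) ^ 2 / (4 * (1 - β * ‖A‖))) *
        (‖ex‖ ^ 2 + ‖el‖ ^ 2) := by
  have ha0 : 0 ≤ β * ‖A‖ := by positivity
  have hN : 0 < ‖ex‖ ^ 2 + ‖el‖ ^ 2 := by
    by_cases hx : ex = 0
    · have : 0 < ‖el‖ := norm_pos_iff.mpr fun h => hne ⟨hx, h⟩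
      positivity
    · have : 0 < ‖ex‖ := norm_pos_iff.mpr hx
      positivity
  have hA : ‖β • A ex‖ ≤ β * ‖A‖ * ‖ex‖ := by
    rw [norm_smul, Real.norm_of_nonneg hβ.le, mul_assoc]
    exact mul_le_mul_of_nonneg_left (A.le_opNorm ex) hβ.le
  have hinner : ⟪el, β • A ex⟫ = β * ⟪el, A ex⟫ := real_inner_smul_right _ _ _
  have ht : |β * ⟪el, A ex⟫| ≤ β * ‖A‖ * (‖ex‖ ^ 2 + ‖el‖ ^ 2) / 2 := by
    rw [← hinner]
    calc |⟪el, β • A ex⟫| ≤ ‖el‖ * ‖β • A ex‖ := abs_real_inner_le_norm _ _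
      _ ≤ ‖el‖ * (β * ‖A‖ * ‖ex‖) := by gcongr
      _ = β * ‖A‖ * (‖el‖ * ‖ex‖) := by ring
      _ ≤ β * ‖A‖ * ((‖ex‖ ^ 2 + ‖el‖ ^ 2) / 2) := by
        gcongr
        nlinarith [sq_nonneg (‖el‖ - ‖ex‖)]
      _ = _ := by ring
  have hs : ‖β • A ex‖ ^ 2 < ‖ex‖ ^ 2 + ‖el‖ ^ 2 := by
    calc ‖β • A ex‖ ^ 2 ≤ (β * ‖A‖ * ‖ex‖) ^ 2 := by gcongr
      _ = (β * ‖A‖) ^ 2 * ‖ex‖ ^ 2 := by ring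
      _ ≤ (β * ‖A‖) ^ 2 * (‖ex‖ ^ 2 + ‖el‖ ^ 2) := by
        gcongr
        exact le_add_of_nonneg_right (sq_nonneg _)
      _ < 1 * (‖ex‖ ^ 2 + ‖el‖ ^ 2) := by
        gcongr
        exact pow_lt_one₀ ha0 hβA two_ne_zero
      _ = _ := one_mul _
  have hψ : ‖ex‖ ^ 2 + ‖el - β • A ex‖ ^ 2 =
      ‖ex‖ ^ 2 + ‖el‖ ^ 2 - 2 * (β * ⟪el, A ex⟫) + ‖β • A ex‖ ^ 2 := by
    rw [norm_sub_sq_real, hinner]; ring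
  obtain ⟨h1, h2⟩ := scalar_bounds _ _ _ _ hβA hN (sq_nonneg ‖β • A ex‖) hs ht
  rw [hψ]
  simp only [mul_assoc (ρ ^ 2)]
  exact ⟨mul_lt_mul_of_pos_left h1 (by positivity), mul_le_mul_of_nonneg_left h2 (by positivity)⟩
end
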